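/- Let V be a primitive linear subspace of J3(F2) of dimension 3. Then V is equivalent to one and only one of the following four spaces of 3×3 matrices over F2, each parametrized by (a,b,c) ∈ F2^3: M1 = [[a,0,c],[0,a+b,0],[0,0,b]], M2 = [[a,c,0],[0,a+b,a],[0,0,b]], M3 = [[a,b,0],[0,a+b,c],[0,0,b]], M4 = [[a,c,0],[0,a+b,c],[0,0,b]]. -/

import Mathlib

/-!
The outer diagonal entries `(a, b)` determine the diagonal `(a, a + b, b)` of a matrix of `J3`.
Reducedness prevents `a` and `b` from vanishing identically on `V`, and semi-primitivity prevents
`a = b` on `V`: otherwise the middle diagonal entry vanishes, so the first two columns of every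
matrix have rank at most one although the upper rank is at least two. Over `F2` no other line
through the origin of the `(a, b)`-plane exists, so `V` is spanned by matrices `A`, `B` with outer
diagonal `(1, 0)`, `(0, 1)` and a nonzero strictly upper-triangular matrix `N`. Row and column
operations make `A` and `B` diagonal and keep `N` strictly upper-triangular; the seven possibilities
for `N` each lead to one of the four models.

The models are told apart by counting the vectors `x` for which `V x = {M x : M ∈ V}` has dimension
at most one, for `V` and for its transpose: the pairs of counts are `(3, 3)`, `(2, 3)`, `(3, 2)` and
`(2, 2)`.
-/

open Matrix

/-- Two linear subspaces of `n × p` matrices over `K` are *equivalent* when one is obtained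
from the other by multiplying on the left and on the right by fixed invertible matrices. -/
def MatEquiv (K : Type*) [Field K] {n p : ℕ}
    (V₁ V₂ : Submodule K (Matrix (Fin n) (Fin p) K)) : Prop :=
  ∃ (P : Matrix (Fin n) (Fin n) K) (Q : Matrix (Fin p) (Fin p) K),
    IsUnit P ∧ IsUnit Q ∧
      (V₂ : Set (Matrix (Fin n) (Fin p) K)) =
        (fun M => P * M * Q) '' (V₁ : Set (Matrix (Fin n) (Fin p) K))

/-- A linear subspace of matrices is *reduced* when no nonzero vector is annihilated by every
matrix of the space, and the column spaces of the matrices of the space together span the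
whole target space. -/
def Reduced (K : Type*) [Field K] {n p : ℕ}
    (V : Submodule K (Matrix (Fin n) (Fin p) K)) : Prop :=
  (∀ x : Fin p → K, (∀ M ∈ V, M.mulVec x = 0) → x = 0) ∧
  Submodule.span K {y : Fin n → K | ∃ M ∈ V, ∃ x : Fin p → K, M.mulVec x = y} = ⊤

/-- The *upper rank* of a linear subspace of matrices: the maximal rank of a matrix in it. -/
noncomputable def urk {K : Type*} [Field K] {n p : ℕ}
    (V : Submodule K (Matrix (Fin n) (Fin p) K)) : ℕ :=
  sSup (Matrix.rank '' (V : Set (Matrix (Fin n) (Fin p) K)))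

/-- The matrix obtained by deleting the last column. -/
def dropCol {K : Type*} [Field K] {n p : ℕ} (M : Matrix (Fin n) (Fin p) K) :
    Matrix (Fin n) (Fin (p - 1)) K :=
  M.submatrix id (Fin.castLE (Nat.sub_le p 1))

/-- The matrix obtained by deleting the last row. -/
def dropRow {K : Type*} [Field K] {n p : ℕ} (M : Matrix (Fin n) (Fin p) K) :
    Matrix (Fin (n - 1)) (Fin p) K :=
  M.submatrix (Fin.castLE (Nat.sub_le n 1)) id

/-- A linear subspace of matrices (of upper rank `r = urk V`) is *semi-primitive* when it is
reduced and it is not equivalent to a subspace `T` such that the space obtained by deleting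
the last column of each matrix of `T` has upper rank at most `r - 1`. -/
def SemiPrimitive (K : Type*) [Field K] {n p : ℕ}
    (V : Submodule K (Matrix (Fin n) (Fin p) K)) : Prop :=
  Reduced K V ∧
    ¬ ∃ T : Submodule K (Matrix (Fin n) (Fin p) K),
        MatEquiv K V T ∧ ∀ M ∈ T, (dropCol M).rank ≤ urk V - 1

/-- A linear subspace of matrices (of upper rank `r = urk V`) is *primitive* when it is
semi-primitive and it is not equivalent to a subspace `T` such that the space obtained by
deleting the last row of each matrix of `T` has upper rank at most `r - 1`. -/
def Primitive (K : Type*) [Field K] {n p : ℕ}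
    (V : Submodule K (Matrix (Fin n) (Fin p) K)) : Prop :=
  SemiPrimitive K V ∧
    ¬ ∃ T : Submodule K (Matrix (Fin n) (Fin p) K),
        MatEquiv K V T ∧ ∀ M ∈ T, (dropRow M).rank ≤ urk V - 1

/-- `J3(F2)`: the space of upper-triangular `3 × 3` matrices over `F2` with trace zero. -/
def J3 : Submodule (ZMod 2) (Matrix (Fin 3) (Fin 3) (ZMod 2)) where
  carrier := {M | M.trace = 0 ∧ ∀ i j : Fin 3, j < i → M i j = 0}
  add_mem' := by
    rintro M N ⟨hM1, hM2⟩ ⟨hN1, hN2⟩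
    refine ⟨by simp [Matrix.trace_add, hM1, hN1], ?_⟩
    intro i j h
    simp [Matrix.add_apply, hM2 i j h, hN2 i j h]
  zero_mem' := by
    refine ⟨by simp, ?_⟩
    intro i j h
    simp
  smul_mem' := by
    rintro c M ⟨hM1, hM2⟩
    refine ⟨by simp [Matrix.trace_smul, hM1], ?_⟩
    intro i j h
    simp [Matrix.smul_apply, hM2 i j h]

/-- The space of matrices `!![a, 0, c; 0, a + b, 0; 0, 0, b]`. -/
def SpaceM1 : Submodule (ZMod 2) (Matrix (Fin 3) (Fin 3) (ZMod 2)) where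
  carrier := {M | ∃ a b c : ZMod 2, M = !![a, 0, c; 0, a + b, 0; 0, 0, b]}
  add_mem' := by
    rintro M N ⟨a, b, c, rfl⟩ ⟨a', b', c', rfl⟩
    exact ⟨a + a', b + b', c + c', by revert a b c a' b' c'; decide⟩
  zero_mem' := ⟨0, 0, 0, by decide⟩
  smul_mem' := by
    rintro k M ⟨a, b, c, rfl⟩
    exact ⟨k * a, k * b, k * c, by revert k a b c; decide⟩

/-- The space of matrices `!![a, c, 0; 0, a + b, a; 0, 0, b]`. -/
def SpaceM2 : Submodule (ZMod 2) (Matrix (Fin 3) (Fin 3) (ZMod 2)) where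
  carrier := {M | ∃ a b c : ZMod 2, M = !![a, c, 0; 0, a + b, a; 0, 0, b]}
  add_mem' := by
    rintro M N ⟨a, b, c, rfl⟩ ⟨a', b', c', rfl⟩
    exact ⟨a + a', b + b', c + c', by revert a b c a' b' c'; decide⟩
  zero_mem' := ⟨0, 0, 0, by decide⟩
  smul_mem' := by
    rintro k M ⟨a, b, c, rfl⟩
    exact ⟨k * a, k * b, k * c, by revert k a b c; decide⟩

/-- The space of matrices `!![a, b, 0; 0, a + b, c; 0, 0, b]`. -/
def SpaceM3 : Submodule (ZMod 2) (Matrix (Fin 3) (Fin 3) (ZMod 2)) where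
  carrier := {M | ∃ a b c : ZMod 2, M = !![a, b, 0; 0, a + b, c; 0, 0, b]}
  add_mem' := by
    rintro M N ⟨a, b, c, rfl⟩ ⟨a', b', c', rfl⟩
    exact ⟨a + a', b + b', c + c', by revert a b c a' b' c'; decide⟩
  zero_mem' := ⟨0, 0, 0, by decide⟩
  smul_mem' := by
    rintro k M ⟨a, b, c, rfl⟩
    exact ⟨k * a, k * b, k * c, by revert k a b c; decide⟩

/-- The space of matrices `!![a, c, 0; 0, a + b, c; 0, 0, b]`. -/
def SpaceM4 : Submodule (ZMod 2) (Matrix (Fin 3) (Fin 3) (ZMod 2)) where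
  carrier := {M | ∃ a b c : ZMod 2, M = !![a, c, 0; 0, a + b, c; 0, 0, b]}
  add_mem' := by
    rintro M N ⟨a, b, c, rfl⟩ ⟨a', b', c', rfl⟩
    exact ⟨a + a', b + b', c + c', by revert a b c a' b' c'; decide⟩
  zero_mem' := ⟨0, 0, 0, by decide⟩
  smul_mem' := by
    rintro k M ⟨a, b, c, rfl⟩
    exact ⟨k * a, k * b, k * c, by revert k a b c; decide⟩

/-- Exactly one of four conditions holds. -/
def ExactlyOne4 (c₁ c₂ c₃ c₄ : Prop) : Prop :=
  (c₁ ∧ ¬c₂ ∧ ¬c₃ ∧ ¬c₄) ∨ (¬c₁ ∧ c₂ ∧ ¬c₃ ∧ ¬c₄) ∨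
  (¬c₁ ∧ ¬c₂ ∧ c₃ ∧ ¬c₄) ∨ (¬c₁ ∧ ¬c₂ ∧ ¬c₃ ∧ c₄)

section LinearAlgebra

variable {K E : Type*} [Field K] [AddCommGroup E] [Module K E]

theorem range_cons_triple {α : Type*} (a b c : α) : Set.range ![a, b, c] = {a, b, c} := by
  simp only [Matrix.range_cons, Matrix.range_empty, Set.union_empty, Set.singleton_union]

theorem finrank_span_triple_le (A B N : E) :
    Module.finrank K (Submodule.span K {A, B, N}) ≤ 3 := by
  have hrange : Module.finrank K (Submodule.span K (Set.range ![A, B, N])) ≤ 3 :=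
    finrank_range_le_card ![A, B, N]
  rwa [range_cons_triple] at hrange

theorem finrank_span_triple_of_apply_eq {A B N : E} {f : E →ₗ[K] K × K} (hA : f A = (1, 0))
    (hB : f B = (0, 1)) (hfN : f N = 0) (hN : N ≠ 0) :
    Module.finrank K (Submodule.span K {A, B, N}) = 3 := by
  have hli : LinearIndependent K ![A, B, N] := by
    rw [Fintype.linearIndependent_iff]
    intro g hg
    rw [Fin.sum_univ_three] at hg
    have hfg : (g 0, g 1) = (0 : K × K) := by simpa [hA, hB, hfN] using congrArg f hg
    obtain ⟨h0, h1⟩ := Prod.mk_eq_zero.mp hfg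
    have h2 : g 2 = 0 := by simpa [h0, h1, hN] using hg
    exact Fin.forall_fin_succ.mpr ⟨h0, Fin.forall_fin_two.mpr ⟨h1, h2⟩⟩
  rw [← range_cons_triple, finrank_span_eq_card hli, Fintype.card_fin]

theorem exists_eq_span_triple_of_map_eq_top {V : Submodule K E} {f : E →ₗ[K] K × K}
    (hf : V.map f = ⊤) (hV : Module.finrank K V = 3) :
    ∃ A B N : E, f A = (1, 0) ∧ f B = (0, 1) ∧ f N = 0 ∧ N ≠ 0 ∧
      V = Submodule.span K {A, B, N} := by
  have : FiniteDimensional K V := Module.finite_of_finrank_pos (by omega)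
  obtain ⟨A, hA, hfA⟩ : (1, 0) ∈ V.map f := hf ▸ Submodule.mem_top
  obtain ⟨B, hB, hfB⟩ : (0, 1) ∈ V.map f := hf ▸ Submodule.mem_top
  have hker : LinearMap.ker (f.domRestrict V) ≠ ⊥ :=
    LinearMap.ker_ne_bot_of_finrank_lt (by simp [hV])
  obtain ⟨N, hfN, hN⟩ := Submodule.exists_mem_ne_zero_of_ne_bot hker
  have hN : (N : E) ≠ 0 := by simpa using hN
  refine ⟨A, B, N, hfA, hfB, hfN, hN, Eq.symm (Submodule.eq_of_le_of_finrank_eq ?_ ?_)⟩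
  · simp [Submodule.span_le, Set.insert_subset_iff, hA, hB]
  · exact (finrank_span_triple_of_apply_eq hfA hfB hfN hN).trans hV.symm

theorem zmod_two_eq_zero_or_one (x : ZMod 2) : x = 0 ∨ x = 1 := by
  decide +revert

/-- Over `F2` every nonzero functional on the plane is one of `v.1`, `v.2`, `v.1 + v.2`. -/
theorem eq_top_of_exists_coordinates_ne {S : Submodule (ZMod 2) (ZMod 2 × ZMod 2)}
    (hfst : ∃ v ∈ S, v.1 ≠ 0) (hsnd : ∃ v ∈ S, v.2 ≠ 0) (hne : ∃ v ∈ S, v.1 ≠ v.2) : S = ⊤ := by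
  by_contra hS
  obtain ⟨f, hf, hSf⟩ := Submodule.exists_le_ker_of_lt_top S (lt_top_iff_ne_top.mpr hS)
  have f_apply (v : ZMod 2 × ZMod 2) : f v = v.1 * f (1, 0) + v.2 * f (0, 1) := by
    rw [← smul_eq_mul, ← smul_eq_mul, ← map_smul, ← map_smul, ← map_add]
    simp
  have hvanish (v) (hv : v ∈ S) : v.1 * f (1, 0) + v.2 * f (0, 1) = 0 :=
    f_apply v ▸ hSf hv
  rcases zmod_two_eq_zero_or_one (f (1, 0)) with h10 | h10 <;>
    rcases zmod_two_eq_zero_or_one (f (0, 1)) with h01 | h01 <;>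
    simp only [h10, h01, mul_zero, mul_one, zero_add, add_zero,
      CharTwo.add_eq_zero] at f_apply hvanish
  · exact hf (LinearMap.ext f_apply)
  · exact hsnd.elim fun v hv => hv.2 (hvanish v hv.1)
  · exact hfst.elim fun v hv => hv.2 (hvanish v hv.1)
  · exact hne.elim fun v hv => hv.2 (hvanish v hv.1)

theorem two_le_rank_of_minor_ne_zero {m n : Type*} [Fintype n] (M : Matrix m n K) (i i' : m)
    (j j' : n) (hM : M i j * M i' j' - M i j' * M i' j ≠ 0) : 2 ≤ M.rank := by
  have hunit : IsUnit (M.submatrix ![i, i'] ![j, j']) := by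
    rw [Matrix.isUnit_iff_isUnit_det, Matrix.det_fin_two]
    exact isUnit_iff_ne_zero.mpr hM
  calc 2 = (M.submatrix ![i, i'] ![j, j']).rank := by
        rw [Matrix.rank_of_isUnit _ hunit, Fintype.card_fin]
    _ ≤ M.rank := Matrix.rank_submatrix_le _ _ _

end LinearAlgebra

section Invertible

variable {R m n : Type*} [CommRing R] [Fintype m] [DecidableEq m] [Fintype n] [DecidableEq n]
  {P : Matrix m m R} {Q : Matrix n n R}

theorem inv_mul_mul_mul_mul_inv (hP : IsUnit P) (hQ : IsUnit Q) (M : Matrix m n R) :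
    P⁻¹ * (P * M * Q) * Q⁻¹ = M := by
  rw [Matrix.isUnit_iff_isUnit_det] at hP hQ
  rw [Matrix.mul_assoc P, nonsing_inv_mul_cancel_left _ _ hP, mul_nonsing_inv_cancel_right _ _ hQ]

theorem mul_mul_injective (hP : IsUnit P) (hQ : IsUnit Q) :
    Function.Injective fun M : Matrix m n R => P * M * Q :=
  Function.LeftInverse.injective (g := fun M => P⁻¹ * M * Q⁻¹) (inv_mul_mul_mul_mul_inv hP hQ)

end Invertible

section MatrixSpaces

variable {K : Type*} [Field K] {n p : ℕ}
  {V W X : Submodule K (Matrix (Fin n) (Fin p) K)}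

namespace MatEquiv

theorem refl (V : Submodule K (Matrix (Fin n) (Fin p) K)) : MatEquiv K V V :=
  ⟨1, 1, isUnit_one, isUnit_one, by simp⟩

theorem symm (hVW : MatEquiv K V W) : MatEquiv K W V := by
  obtain ⟨P, Q, hP, hQ, hW⟩ := hVW
  refine ⟨P⁻¹, Q⁻¹, isUnit_nonsing_inv_iff.mpr hP, isUnit_nonsing_inv_iff.mpr hQ, ?_⟩
  simp only [hW, Set.image_image, inv_mul_mul_mul_mul_inv hP hQ, Set.image_id']

theorem trans (hVW : MatEquiv K V W) (hWX : MatEquiv K W X) : MatEquiv K V X := by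
  obtain ⟨P, Q, hP, hQ, hW⟩ := hVW
  obtain ⟨P', Q', hP', hQ', hX⟩ := hWX
  refine ⟨P' * P, Q * Q', hP'.mul hP, hQ.mul hQ', ?_⟩
  simp only [hX, hW, Set.image_image, Matrix.mul_assoc]

theorem span_of_forall_mem {S : Set (Matrix (Fin n) (Fin p) K)} {P : Matrix (Fin n) (Fin n) K}
    {Q : Matrix (Fin p) (Fin p) K} (hP : IsUnit P) (hQ : IsUnit Q) (hS : ∀ M ∈ S, P * M * Q ∈ W)
    (hfinrank : Module.finrank K W ≤ Module.finrank K (Submodule.span K S)) :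
    MatEquiv K (Submodule.span K S) W := by
  let φ : Matrix (Fin n) (Fin p) K →ₗ[K] Matrix (Fin n) (Fin p) K :=
    mulRightLinearMap (Fin n) K Q ∘ₗ mulLeftLinearMap (Fin p) K P
  have hφ : Function.Injective φ := mul_mul_injective hP hQ
  have hle : (Submodule.span K S).map φ ≤ W :=
    Submodule.map_le_iff_le_comap.mpr (Submodule.span_le.mpr hS)
  have hmap : (Submodule.span K S).map φ = W :=
    Submodule.eq_of_le_of_finrank_le hle
      (hfinrank.trans_eq (Submodule.equivMapOfInjective φ hφ _).finrank_eq)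
  exact ⟨P, Q, hP, hQ, by rw [← hmap]; rfl⟩

end MatEquiv

theorem Reduced.exists_col_ne_zero (hV : Reduced K V) (j : Fin p) : ∃ M ∈ V, M.col j ≠ 0 := by
  by_contra! hcol
  have hsingle : Pi.single j (1 : K) = 0 :=
    hV.1 _ fun M hM => by rw [mulVec_single_one, hcol M hM]
  simp at hsingle

theorem Reduced.exists_row_ne_zero (hV : Reduced K V) (i : Fin n) : ∃ M ∈ V, M.row i ≠ 0 := by
  by_contra! hrow
  have hspan : Submodule.span K {y : Fin n → K | ∃ M ∈ V, ∃ x : Fin p → K, M.mulVec x = y} ≤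
      LinearMap.ker (LinearMap.proj i : (Fin n → K) →ₗ[K] K) := by
    rw [Submodule.span_le]
    rintro _ ⟨M, hM, x, rfl⟩
    exact (congrArg (· ⬝ᵥ x) (hrow M hM)).trans (zero_dotProduct x)
  rw [hV.2] at hspan
  have hsingle : Pi.single i 1 ∈ LinearMap.ker (LinearMap.proj i : (Fin n → K) →ₗ[K] K) :=
    hspan Submodule.mem_top
  simp at hsingle

theorem rank_le_urk {M : Matrix (Fin n) (Fin p) K} (hM : M ∈ V) : M.rank ≤ urk V := by
  refine le_csSup ⟨p, ?_⟩ ⟨M, hM, rfl⟩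
  rintro _ ⟨N, -, rfl⟩
  exact rank_le_width N

theorem SemiPrimitive.exists_urk_le_rank_dropCol (hV : SemiPrimitive K V) :
    ∃ M ∈ V, urk V ≤ (dropCol M).rank := by
  by_contra! hrank
  exact hV.2 ⟨V, .refl V, fun M hM => Nat.le_sub_one_of_lt (hrank M hM)⟩

/-- The vectors `x` for which `V x = {M x : M ∈ V}` has dimension at most one, that is, lies in the
line spanned by some vector `w`. -/
def thinVectors (V : Submodule K (Matrix (Fin n) (Fin p) K)) : Set (Fin p → K) :=
  {x | ∃ w : Fin n → K, ∀ M ∈ V, ∃ k : K, k • w = M *ᵥ x}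

theorem MatEquiv.encard_thinVectors_le (hVW : MatEquiv K V W) :
    (thinVectors W).encard ≤ (thinVectors V).encard := by
  obtain ⟨P, Q, hP, hQ, hW⟩ := hVW
  refine Set.encard_le_encard_of_injOn (f := (Q *ᵥ ·)) ?_ (mulVec_injective_of_isUnit hQ).injOn
  rintro x ⟨w, hw⟩
  refine ⟨P⁻¹ *ᵥ w, fun M hM => ?_⟩
  obtain ⟨k, hk⟩ := hw (P * M * Q) (hW.ge ⟨M, hM, rfl⟩)
  refine ⟨k, ?_⟩
  rw [← mulVec_smul, hk, mulVec_mulVec, mulVec_mulVec, Matrix.mul_assoc P,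
    nonsing_inv_mul_cancel_left _ _ ((isUnit_iff_isUnit_det P).mp hP)]

theorem MatEquiv.encard_thinVectors_eq (hVW : MatEquiv K V W) :
    (thinVectors V).encard = (thinVectors W).encard :=
  hVW.symm.encard_thinVectors_le.antisymm hVW.encard_thinVectors_le

/-- The space of transposes of the matrices of `V`; it exchanges the roles of rows and columns. -/
def transposeSpace (V : Submodule K (Matrix (Fin n) (Fin p) K)) :
    Submodule K (Matrix (Fin p) (Fin n) K) :=
  V.map (transposeLinearEquiv (Fin n) (Fin p) K K).toLinearMap

theorem forall_mem_transposeSpace {c : Matrix (Fin p) (Fin n) K → Prop} :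
    (∀ M ∈ transposeSpace V, c M) ↔ ∀ M ∈ V, c Mᵀ :=
  Set.forall_mem_image

theorem MatEquiv.transpose (hVW : MatEquiv K V W) :
    MatEquiv K (transposeSpace V) (transposeSpace W) := by
  obtain ⟨P, Q, hP, hQ, hW⟩ := hVW
  refine ⟨Qᵀ, Pᵀ, (isUnit_transpose Q).mpr hQ, (isUnit_transpose P).mpr hP, ?_⟩
  simp [transposeSpace, hW, Set.image_image, Matrix.mul_assoc]

end MatrixSpaces

section TriangularMatrices

variable {R : Type*} [CommRing R]

theorem isUnit_unitriangular (x y z : R) : IsUnit !![1, x, y; 0, 1, z; 0, 0, 1] := by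
  simp [isUnit_iff_isUnit_det, det_fin_three]

/-- `Q` clears the first matrix by column operations and `P` then clears the second and third
columns of the second matrix by row operations. The latter create an entry `-p₂` next to the first
pivot of the first matrix; since the first column of the second matrix vanishes, a last column
operation, included in `Q`, removes it. -/
theorem exists_isUnit_mul_mul_eq_diagonal (p₁ q₁ r₁ p₂ q₂ r₂ : R) :
    ∃ P Q : Matrix (Fin 3) (Fin 3) R, IsUnit P ∧ IsUnit Q ∧
      P * !![1, p₁, q₁; 0, 1, r₁; 0, 0, 0] * Q = !![1, 0, 0; 0, 1, 0; 0, 0, 0] ∧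
      P * !![0, p₂, q₂; 0, 1, r₂; 0, 0, 1] * Q = !![0, 0, 0; 0, 1, 0; 0, 0, 1] ∧
      ∀ p q r : R, P * !![0, p, q; 0, 0, r; 0, 0, 0] * Q =
        !![0, p, q - p * r₁ - p₂ * r; 0, 0, r; 0, 0, 0] := by
  refine ⟨!![1, -p₂, p₂ * r₂ - q₂; 0, 1, r₁ - r₂; 0, 0, 1],
    !![1, p₂ - p₁, p₁ * r₁ - q₁; 0, 1, -r₁; 0, 0, 1],
    isUnit_unitriangular _ _ _, isUnit_unitriangular _ _ _, ?_, ?_, fun p q r => ?_⟩ <;>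
  · simp only [mul_fin_three, EmbeddingLike.apply_eq_iff_eq, vecCons_inj]
    ring_nf
    simp

end TriangularMatrices

section J3

variable {V : Submodule (ZMod 2) (Matrix (Fin 3) (Fin 3) (ZMod 2))}

/-- The corner entries `(M 0 0, M 2 2)`, which determine the diagonal of a matrix of `J3`. -/
def outerDiag (K : Type*) [Semiring K] : Matrix (Fin 3) (Fin 3) K →ₗ[K] K × K :=
  (entryLinearMap K K 0 0).prod (entryLinearMap K K 2 2)

theorem exists_eq_upperTriangular_of_mem_J3 {M : Matrix (Fin 3) (Fin 3) (ZMod 2)} {a b : ZMod 2}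
    (hM : M ∈ J3) (hdiag : outerDiag (ZMod 2) M = (a, b)) :
    ∃ p q r : ZMod 2, M = !![a, p, q; 0, a + b, r; 0, 0, b] := by
  obtain ⟨htrace, htri⟩ := hM
  obtain ⟨rfl, rfl⟩ := Prod.mk.inj hdiag
  have h11 : M 0 0 + M 2 2 = M 1 1 := by
    rwa [trace_fin_three, add_right_comm, CharTwo.add_eq_zero] at htrace
  refine ⟨M 0 1, M 0 2, M 1 2, ?_⟩
  ext i j
  fin_cases i <;> fin_cases j <;> simp [h11, htri]

theorem exists_apply_zero_zero_ne_zero (hV : V ≤ J3) (hred : Reduced (ZMod 2) V) :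
    ∃ M ∈ V, M 0 0 ≠ 0 := by
  obtain ⟨M, hM, hcol⟩ := hred.exists_col_ne_zero 0
  refine ⟨M, hM, fun h00 => hcol ?_⟩
  ext i
  fin_cases i
  exacts [h00, (hV hM).2 1 0 (by decide), (hV hM).2 2 0 (by decide)]

theorem exists_apply_two_two_ne_zero (hV : V ≤ J3) (hred : Reduced (ZMod 2) V) :
    ∃ M ∈ V, M 2 2 ≠ 0 := by
  obtain ⟨M, hM, hrow⟩ := hred.exists_row_ne_zero 2
  refine ⟨M, hM, fun h22 => hrow ?_⟩
  ext j
  fin_cases j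
  exacts [(hV hM).2 2 0 (by decide), (hV hM).2 2 1 (by decide), h22]

theorem rank_dropCol_le_one {M : Matrix (Fin 3) (Fin 3) (ZMod 2)} (hM : M ∈ J3)
    (hdiag : M 0 0 = M 2 2) : (dropCol M).rank ≤ 1 := by
  have hdiag' : outerDiag (ZMod 2) M = (M 2 2, M 2 2) := Prod.ext hdiag rfl
  obtain ⟨p, q, r, hM_eq⟩ := exists_eq_upperTriangular_of_mem_J3 hM hdiag'
  generalize M 2 2 = a at hM_eq
  have hrankOne : dropCol M = vecMulVec ![1, 0, 0] ![a, p] := by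
    rw [hM_eq, CharTwo.add_self_eq_zero]
    ext i j
    fin_cases i <;> fin_cases j <;> simp [dropCol, vecMulVec_apply]
  exact hrankOne ▸ rank_vecMulVec_le _ _

theorem exists_apply_zero_zero_ne_apply_two_two (hV : V ≤ J3) (hsemi : SemiPrimitive (ZMod 2) V) :
    ∃ M ∈ V, M 0 0 ≠ M 2 2 := by
  by_contra! hdiag
  obtain ⟨M, hM, h00⟩ := exists_apply_zero_zero_ne_zero hV hsemi.1
  have htwo : 2 ≤ M.rank := by
    refine two_le_rank_of_minor_ne_zero M 0 2 0 2 ?_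
    rw [(hV hM).2 2 0 (by decide), mul_zero, sub_zero, ← hdiag M hM]
    exact mul_ne_zero h00 h00
  obtain ⟨N, hN, hurk⟩ := hsemi.exists_urk_le_rank_dropCol
  have hone : (dropCol N).rank ≤ 1 := rank_dropCol_le_one (hV hN) (hdiag N hN)
  have hM_urk : M.rank ≤ urk V := rank_le_urk hM
  omega

theorem map_outerDiag_eq_top (hV : V ≤ J3) (hsemi : SemiPrimitive (ZMod 2) V) :
    V.map (outerDiag (ZMod 2)) = ⊤ :=
  eq_top_of_exists_coordinates_ne
    (by simpa [outerDiag] using exists_apply_zero_zero_ne_zero hV hsemi.1)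
    (by simpa [outerDiag] using exists_apply_two_two_ne_zero hV hsemi.1)
    (by simpa [outerDiag] using exists_apply_zero_zero_ne_apply_two_two hV hsemi)

/-- The space of matrices `!![a, c * p, c * q; 0, a + b, c * r; 0, 0, b]`, given by generators. -/
def normalForm (p q r : ZMod 2) : Submodule (ZMod 2) (Matrix (Fin 3) (Fin 3) (ZMod 2)) :=
  Submodule.span (ZMod 2) {!![1, 0, 0; 0, 1, 0; 0, 0, 0], !![0, 0, 0; 0, 1, 0; 0, 0, 1],
    !![0, p, q; 0, 0, r; 0, 0, 0]}

theorem finrank_normalForm {p q r : ZMod 2} (hN : !![0, p, q; 0, 0, r; 0, 0, 0] ≠ 0) :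
    Module.finrank (ZMod 2) (normalForm p q r) = 3 :=
  finrank_span_triple_of_apply_eq (f := outerDiag (ZMod 2)) rfl rfl rfl hN

theorem exists_matEquiv_normalForm (hV : V ≤ J3) (hsemi : SemiPrimitive (ZMod 2) V)
    (hdim : Module.finrank (ZMod 2) V = 3) :
    ∃ p q r : ZMod 2, !![0, p, q; 0, 0, r; 0, 0, 0] ≠ 0 ∧
      MatEquiv (ZMod 2) V (normalForm p q r) := by
  obtain ⟨A, B, N, hdA, hdB, hdN, hN0, rfl⟩ :=
    exists_eq_span_triple_of_map_eq_top (map_outerDiag_eq_top hV hsemi) hdim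
  have hmem : {A, B, N} ⊆ (J3 : Set (Matrix (Fin 3) (Fin 3) (ZMod 2))) :=
    Submodule.subset_span.trans hV
  obtain ⟨p₁, q₁, r₁, hA_eq⟩ := exists_eq_upperTriangular_of_mem_J3 (hmem (by simp)) hdA
  obtain ⟨p₂, q₂, r₂, hB_eq⟩ := exists_eq_upperTriangular_of_mem_J3 (hmem (by simp)) hdB
  obtain ⟨p, q, r, hN_eq⟩ := exists_eq_upperTriangular_of_mem_J3 (hmem (by simp)) hdN
  rw [add_zero] at hA_eq hN_eq
  rw [zero_add] at hB_eq
  subst hA_eq hB_eq hN_eq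
  obtain ⟨P, Q, hP, hQ, hA, hB, hN⟩ := exists_isUnit_mul_mul_eq_diagonal p₁ q₁ r₁ p₂ q₂ r₂
  have hN0' : !![0, p, q - p * r₁ - p₂ * r; 0, 0, r; 0, 0, 0] ≠ 0 := by
    rw [← hN]
    simpa [hP.mul_right_eq_zero, hQ.mul_left_eq_zero] using hN0
  refine ⟨_, _, _, hN0', .span_of_forall_mem hP hQ ?_ ?_⟩
  · rintro _ (rfl | rfl | rfl)
    exacts [hA ▸ Submodule.subset_span (by simp), hB ▸ Submodule.subset_span (by simp),
      hN p q r ▸ Submodule.subset_span (by simp)]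
  · rw [hdim, finrank_normalForm hN0']

end J3

section Models

/-- A matrix of the `i`-th model space, as a function of its parameters `a`, `b`, `c`. -/
def modelMatrix : Fin 4 → ZMod 2 → ZMod 2 → ZMod 2 → Matrix (Fin 3) (Fin 3) (ZMod 2) :=
  ![fun a b c => !![a, 0, c; 0, a + b, 0; 0, 0, b], fun a b c => !![a, c, 0; 0, a + b, a; 0, 0, b],
    fun a b c => !![a, b, 0; 0, a + b, c; 0, 0, b], fun a b c => !![a, c, 0; 0, a + b, c; 0, 0, b]]

/-- The four model spaces as a family, indexed from `0`. -/
def modelSpace : Fin 4 → Submodule (ZMod 2) (Matrix (Fin 3) (Fin 3) (ZMod 2)) :=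
  ![SpaceM1, SpaceM2, SpaceM3, SpaceM4]

theorem mem_modelSpace {i : Fin 4} {M : Matrix (Fin 3) (Fin 3) (ZMod 2)} :
    M ∈ modelSpace i ↔ ∃ a b c, M = modelMatrix i a b c := by
  fin_cases i <;> rfl

theorem forall_mem_modelSpace {i : Fin 4} {c : Matrix (Fin 3) (Fin 3) (ZMod 2) → Prop} :
    (∀ M ∈ modelSpace i, c M) ↔ ∀ a b d, c (modelMatrix i a b d) := by
  refine ⟨fun h a b d => h _ (mem_modelSpace.mpr ⟨a, b, d, rfl⟩), fun h M hM => ?_⟩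
  obtain ⟨a, b, d, rfl⟩ := mem_modelSpace.mp hM
  exact h a b d

theorem modelMatrix_eq_linear_combination (i : Fin 4) (a b c : ZMod 2) :
    a • modelMatrix i 1 0 0 + b • modelMatrix i 0 1 0 + c • modelMatrix i 0 0 1 =
      modelMatrix i a b c := by
  revert i a b c
  decide

theorem finrank_modelSpace_le (i : Fin 4) : Module.finrank (ZMod 2) (modelSpace i) ≤ 3 := by
  have hle : modelSpace i ≤ Submodule.span (ZMod 2)
      {modelMatrix i 1 0 0, modelMatrix i 0 1 0, modelMatrix i 0 0 1} := by
    intro M hM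
    obtain ⟨a, b, c, rfl⟩ := mem_modelSpace.mp hM
    exact Submodule.mem_span_triple.mpr ⟨a, b, c, modelMatrix_eq_linear_combination i a b c⟩
  exact (Submodule.finrank_mono hle).trans (finrank_span_triple_le _ _ _)

theorem normalForm_matEquiv_modelSpace {p q r : ZMod 2} {P Q : Matrix (Fin 3) (Fin 3) (ZMod 2)}
    (hN : !![0, p, q; 0, 0, r; 0, 0, 0] ≠ 0) (hP : IsUnit P) (hQ : IsUnit Q) (i : Fin 4)
    (hmem : ∀ M ∈ [!![1, 0, 0; 0, 1, 0; 0, 0, 0], !![0, 0, 0; 0, 1, 0; 0, 0, 1],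
      !![0, p, q; 0, 0, r; 0, 0, 0]], ∃ a b c, P * M * Q = modelMatrix i a b c) :
    MatEquiv (ZMod 2) (normalForm p q r) (modelSpace i) := by
  refine .span_of_forall_mem hP hQ (fun M hM => mem_modelSpace.mpr (hmem M (by simpa using hM))) ?_
  exact (finrank_modelSpace_le i).trans_eq (finrank_normalForm hN).symm

/-- A lone entry of the strictly upper-triangular generator moves to the corner by a swap of basis
vectors, which permutes the diagonal entries `a`, `a + b`, `b`. Otherwise transvections clear the
corner entry, at the price of entries depending on the diagonal. -/
theorem exists_normalForm_matEquiv_modelSpace {p q r : ZMod 2}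
    (hN : !![0, p, q; 0, 0, r; 0, 0, 0] ≠ 0) :
    ∃ i, MatEquiv (ZMod 2) (normalForm p q r) (modelSpace i) := by
  have hswap₁₂ : IsUnit (!![0, 1, 0; 1, 0, 0; 0, 0, 1] : Matrix (Fin 3) (Fin 3) (ZMod 2)) :=
    .of_mul_eq_one !![0, 1, 0; 1, 0, 0; 0, 0, 1] (by decide)
  have hswap₂₃ : IsUnit (!![1, 0, 0; 0, 0, 1; 0, 1, 0] : Matrix (Fin 3) (Fin 3) (ZMod 2)) :=
    .of_mul_eq_one !![1, 0, 0; 0, 0, 1; 0, 1, 0] (by decide)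
  have hadd₁₂ := isUnit_unitriangular (1 : ZMod 2) 0 0
  have hadd₂₃ := isUnit_unitriangular (0 : ZMod 2) 0 1
  have hadd₁₂₃ := isUnit_unitriangular (1 : ZMod 2) 0 1
  rcases zmod_two_eq_zero_or_one p with rfl | rfl <;>
    rcases zmod_two_eq_zero_or_one q with rfl | rfl <;>
    rcases zmod_two_eq_zero_or_one r with rfl | rfl
  · exact absurd (by decide) hN
  · exact ⟨_, normalForm_matEquiv_modelSpace hN hswap₁₂ hswap₁₂ 0 (by decide +kernel)⟩
  · exact ⟨_, normalForm_matEquiv_modelSpace hN isUnit_one isUnit_one 0 (by decide +kernel)⟩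
  · exact ⟨_, normalForm_matEquiv_modelSpace hN hadd₁₂ hadd₁₂ 2 (by decide +kernel)⟩
  · exact ⟨_, normalForm_matEquiv_modelSpace hN hswap₂₃ hswap₂₃ 0 (by decide +kernel)⟩
  · exact ⟨_, normalForm_matEquiv_modelSpace hN isUnit_one isUnit_one 3 (by decide +kernel)⟩
  · exact ⟨_, normalForm_matEquiv_modelSpace hN hadd₂₃ hadd₂₃ 1 (by decide +kernel)⟩
  · exact ⟨_, normalForm_matEquiv_modelSpace hN hadd₂₃ hadd₁₂₃ 3 (by decide +kernel)⟩

theorem thinVectors_modelSpace (i : Fin 4) :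
    thinVectors (modelSpace i) = ((![{0, ![1, 0, 0], ![0, 1, 0]}, {0, ![1, 0, 0]},
      {0, ![1, 0, 0], ![1, 1, 0]}, {0, ![1, 0, 0]}] i : Finset (Fin 3 → ZMod 2)) : Set _) := by
  ext x
  simp only [thinVectors, forall_mem_modelSpace, Set.mem_ofPred_eq, SetLike.mem_coe]
  revert i x
  decide +kernel

theorem thinVectors_transposeSpace_modelSpace (i : Fin 4) :
    thinVectors (transposeSpace (modelSpace i)) = ((![{0, ![0, 1, 0], ![0, 0, 1]},
      {0, ![0, 0, 1], ![0, 1, 1]}, {0, ![0, 0, 1]}, {0, ![0, 0, 1]}] i :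
        Finset (Fin 3 → ZMod 2)) : Set _) := by
  ext x
  simp only [thinVectors, forall_mem_transposeSpace, forall_mem_modelSpace, Set.mem_ofPred_eq,
    SetLike.mem_coe]
  revert i x
  decide +kernel

theorem encard_thinVectors_modelSpace (i : Fin 4) :
    (thinVectors (modelSpace i)).encard = (![3, 2, 3, 2] i : ℕ) := by
  rw [thinVectors_modelSpace, Set.encard_coe_eq_coe_finsetCard]
  congr 1
  decide +revert

theorem encard_thinVectors_transposeSpace_modelSpace (i : Fin 4) :
    (thinVectors (transposeSpace (modelSpace i))).encard = (![3, 3, 2, 2] i : ℕ) := by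
  rw [thinVectors_transposeSpace_modelSpace, Set.encard_coe_eq_coe_finsetCard]
  congr 1
  decide +revert

theorem eq_of_matEquiv_modelSpace {i j : Fin 4}
    (hij : MatEquiv (ZMod 2) (modelSpace i) (modelSpace j)) : i = j := by
  have hcount : (![3, 2, 3, 2] i : ℕ) = ![3, 2, 3, 2] j := by
    exact_mod_cast encard_thinVectors_modelSpace i ▸ encard_thinVectors_modelSpace j ▸
      hij.encard_thinVectors_eq
  have hcount_transpose : (![3, 3, 2, 2] i : ℕ) = ![3, 3, 2, 2] j := by
    exact_mod_cast encard_thinVectors_transposeSpace_modelSpace i ▸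
      encard_thinVectors_transposeSpace_modelSpace j ▸ hij.transpose.encard_thinVectors_eq
  clear hij
  decide +revert

end Models

theorem existsUnique_matEquiv_modelSpace {V : Submodule (ZMod 2) (Matrix (Fin 3) (Fin 3) (ZMod 2))}
    (hV : V ≤ J3) (hsemi : SemiPrimitive (ZMod 2) V) (hdim : Module.finrank (ZMod 2) V = 3) :
    ∃! i, MatEquiv (ZMod 2) V (modelSpace i) := by
  obtain ⟨p, q, r, hN, hVform⟩ := exists_matEquiv_normalForm hV hsemi hdim
  obtain ⟨i, hi⟩ := exists_normalForm_matEquiv_modelSpace hN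
  have hVi := hVform.trans hi
  exact ⟨i, hVi, fun j hVj => eq_of_matEquiv_modelSpace (hVj.symm.trans hVi)⟩

theorem exactlyOne4_of_existsUnique {c : Fin 4 → Prop} (hc : ∃! i, c i) :
    ExactlyOne4 (c 0) (c 1) (c 2) (c 3) := by
  obtain ⟨i, hi, hunique⟩ := hc
  have h_iff (j : Fin 4) : c j ↔ j = i := ⟨hunique j, fun h => h ▸ hi⟩
  simp only [ExactlyOne4, h_iff]
  clear hi hunique h_iff
  decide +revert

theorem primitive_three_dimensional_subspace_of_J3_general
    (V : Submodule (ZMod 2) (Matrix (Fin 3) (Fin 3) (ZMod 2)))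
    (hV : V ≤ J3) (hsemi : SemiPrimitive (ZMod 2) V)
    (hdim : Module.finrank (ZMod 2) V = 3) :
    ExactlyOne4 (MatEquiv (ZMod 2) V SpaceM1) (MatEquiv (ZMod 2) V SpaceM2)
      (MatEquiv (ZMod 2) V SpaceM3) (MatEquiv (ZMod 2) V SpaceM4) :=
  exactlyOne4_of_existsUnique (existsUnique_matEquiv_modelSpace hV hsemi hdim)

theorem primitive_three_dimensional_subspace_of_J3
    (V : Submodule (ZMod 2) (Matrix (Fin 3) (Fin 3) (ZMod 2)))
    (hV : V ≤ J3) (hprim : Primitive (ZMod 2) V)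
    (hdim : Module.finrank (ZMod 2) V = 3) :
    ExactlyOne4 (MatEquiv (ZMod 2) V SpaceM1) (MatEquiv (ZMod 2) V SpaceM2)
      (MatEquiv (ZMod 2) V SpaceM3) (MatEquiv (ZMod 2) V SpaceM4) :=
  primitive_three_dimensional_subspace_of_J3_general V hV hprim.1 hdim
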